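/- arXiv:2501.02942 — 2 statements merged into one kernel-verified Lean document; each statement's English description precedes it below -/
import Mathlib

section
/- Let n, m ≥ 1, Ω ⊆ [n]×[m], A ∈ ℝ^{n×m}, and λ ≥ 0. For i ∈ [n] let H^i ∈ S^m be the diagonal matrix with (H^i)_{j,j} = 1 if (i,j) ∈ Ω and 0 otherwise, and let P(X) denote the matrix with P(X)_{i,j} = X_{i,j} if (i,j) ∈ Ω and 0 otherwise. Define v₁ as the infimum of Σ_{i∈[n]} ⟨W^{(i,i)}, H^i⟩ − 2⟨P(X), P(A)⟩ + ⟨P(A), P(A)⟩ + λ·tr(Y) over tuples (Y, X, W) with Y ∈ S^n, 0 ⪯ Y ⪯ I_n; X ∈ ℝ^{n×m}; W ∈ S^{nm}_+ (indexed by pairs (i,j) ∈ [n]×[m] so that its diagonal m×m blocks are W^{(i,i)}) with W ⪰ vec(X^⊤)vec(X^⊤)^⊤; and [[Σ_{i∈[n]} W^{(i,i)}, X^⊤],[X, Y]] ⪰ 0. Define v₂ as the infimum of Σ_{i∈[n]} ⟨S^i, H^i⟩ − 2⟨P(X), P(A)⟩ + ⟨P(A), P(A)⟩ + λ·tr(Y)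 over tuples (Y, X, S^1,…,S^n) with Y ∈ S^n, 0 ⪯ Y ⪯ I_n; X ∈ ℝ^{n×m}; S^i ∈ S^m_+ with S^i ⪰ X_{i,·}X_{i,·}^⊤ for every i ∈ [n], where X_{i,·} ∈ ℝ^m is the i-th row of X as a column vector; and [[Σ_{i∈[n]} S^i, X^⊤],[X, Y]] ⪰ 0. Then v₁ = v₂. -/
open Matrix

/-- Frobenius inner product `⟨A,B⟩ = tr(AᵀB)`. -/
def frob {a b : Type*} [Fintype a] [Fintype b] (A B : Matrix a b ℝ) : ℝ :=
  (Aᵀ * B).trace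

/-- The mask `P(X)` keeping the observed entries. -/
def maskP {n m : ℕ} (Obs : Set (Fin n × Fin m)) [DecidablePred (· ∈ Obs)]
    (X : Matrix (Fin n) (Fin m) ℝ) : Matrix (Fin n) (Fin m) ℝ :=
  Matrix.of fun i j => if (i, j) ∈ Obs then X i j else 0

/-- The diagonal matrix `Hⁱ` with `(Hⁱ)_{j,j} = 1` iff `(i,j)` is observed. -/
def Hdiag {n m : ℕ} (Obs : Set (Fin n × Fin m)) [DecidablePred (· ∈ Obs)]
    (i : Fin n) : Matrix (Fin m) (Fin m) ℝ :=
  Matrix.of fun j l => if j = l ∧ (i, j) ∈ Obs then 1 else 0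

/-!
Only the diagonal blocks of `W` enter the objective and the coupling constraint, so the off-diagonal
blocks are free. Restricting `W ⪰ v vᵀ`, `v = vec Xᵀ`, to the diagonal blocks gives `Sⁱ ⪰ xᵢ xᵢᵀ`.
Conversely, adding the block diagonal matrix with blocks `Sⁱ - xᵢ xᵢᵀ ⪰ 0` to `v vᵀ` gives a `W`
with diagonal blocks `Sⁱ`.
-/

section BlockDiagonal

variable {ι κ R : Type*} [DecidableEq ι]

lemma dotProduct_blockDiagonal_mulVec [Fintype ι] [Fintype κ] [NonUnitalNonAssocSemiring R]
    (D : ι → Matrix κ κ R) (x y : κ × ι → R) :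
    x ⬝ᵥ blockDiagonal D *ᵥ y =
      ∑ i, (fun j => x (j, i)) ⬝ᵥ D i *ᵥ fun j => y (j, i) := by
  simp only [dotProduct, mulVec, Fintype.sum_prod_type_right, blockDiagonal_apply, ite_mul,
    zero_mul]
  refine Finset.sum_congr rfl fun i _ => Finset.sum_congr rfl fun j _ => ?_
  rw [Finset.sum_comm]
  simp only [Finset.sum_ite_eq, Finset.mem_univ, if_true]

lemma posSemidef_blockDiagonal [Finite ι] [Finite κ] [Ring R] [PartialOrder R] [StarRing R]
    [AddLeftMono R] {D : ι → Matrix κ κ R} (hD : ∀ i, (D i).PosSemidef) :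
    (blockDiagonal D).PosSemidef := by
  have := Fintype.ofFinite ι
  have := Fintype.ofFinite κ
  refine .of_dotProduct_mulVec_nonneg
    (isHermitian_blockDiagonal_iff.2 fun i => (hD i).isHermitian) fun x => ?_
  rw [dotProduct_blockDiagonal_mulVec]
  exact Finset.sum_nonneg fun i _ => (hD i).dotProduct_mulVec_nonneg _

end BlockDiagonal

section DiagBlock

variable {ι κ R : Type*}

/-- The `i`-th diagonal block `W^{(i,i)}` of a matrix indexed by pairs. The block index is the first
component of a pair, whereas it is the second one in `Matrix.blockDiagonal`. -/
def diagBlock (W : Matrix (ι × κ) (ι × κ) R) (i : ι) : Matrix κ κ R :=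
  W.submatrix (Prod.mk i) (Prod.mk i)

lemma sum_diagBlock [Fintype ι] [AddCommMonoid R] (W : Matrix (ι × κ) (ι × κ) R) :
    ∑ i, diagBlock W i = of fun j l => ∑ i, W (i, j) (i, l) := by
  ext j l
  simp only [diagBlock, Matrix.sum_apply, submatrix_apply, of_apply]

lemma diagBlock_blockDiagonal_swap [DecidableEq ι] [Zero R] (D : ι → Matrix κ κ R) :
    diagBlock ((blockDiagonal D).submatrix Prod.swap Prod.swap) = D := by
  ext i j l
  simp only [diagBlock, submatrix_apply, Prod.swap_prod_mk, blockDiagonal_apply_eq]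

variable [Ring R] [PartialOrder R] [StarRing R]

lemma posSemidef_diagBlock_sub_vecMulVec {X : Matrix ι κ R} {W : Matrix (ι × κ) (ι × κ) R}
    (hW : (W - vecMulVec (vec Xᵀ) (star (vec Xᵀ))).PosSemidef) (i : ι) :
    (diagBlock W i - vecMulVec (X i) (star (X i))).PosSemidef :=
  hW.submatrix (Prod.mk i)

lemma exists_diagBlock_eq_and_posSemidef_sub_vecMulVec [Finite ι] [Finite κ] [AddLeftMono R]
    {X : Matrix ι κ R} {S : ι → Matrix κ κ R}
    (hS : ∀ i, (S i - vecMulVec (X i) (star (X i))).PosSemidef) :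
    ∃ W, diagBlock W = S ∧ (W - vecMulVec (vec Xᵀ) (star (vec Xᵀ))).PosSemidef := by
  classical
  let B := (blockDiagonal fun i => S i - vecMulVec (X i) (star (X i))).submatrix Prod.swap Prod.swap
  have hB : B.PosSemidef := (posSemidef_blockDiagonal hS).submatrix _
  refine ⟨B + vecMulVec (vec Xᵀ) (star (vec Xᵀ)), ?_, by rwa [add_sub_cancel_right]⟩
  funext i
  calc diagBlock (B + vecMulVec (vec Xᵀ) (star (vec Xᵀ))) i
      = diagBlock B i + vecMulVec (X i) (star (X i)) := rfl
    _ = S i := by rw [diagBlock_blockDiagonal_swap, sub_add_cancel]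

end DiagBlock

lemma posSemidef_of_posSemidef_sub_vecMulVec {ι R : Type*} [Finite ι] [Ring R] [PartialOrder R]
    [StarRing R] [StarOrderedRing R] {M : Matrix ι ι R} {v : ι → R}
    (h : (M - vecMulVec v (star v)).PosSemidef) : M.PosSemidef := by
  simpa only [sub_add_cancel] using h.add (posSemidef_vecMulVec_self_star v)

theorem stmt16_general {ι κ : Type*} [Fintype ι] [DecidableEq ι] [Finite κ]
    (f : Matrix ι ι ℝ → Matrix ι κ ℝ → (ι → Matrix κ κ ℝ) → EReal) :
    sInf {x : EReal | ∃ (Y : Matrix ι ι ℝ) (X : Matrix ι κ ℝ) (W : Matrix (ι × κ) (ι × κ) ℝ),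
        Y.PosSemidef ∧ (1 - Y).PosSemidef ∧
        W.PosSemidef ∧ (W - vecMulVec (vec Xᵀ) (vec Xᵀ)).PosSemidef ∧
        (fromBlocks (∑ i, diagBlock W i) Xᵀ X Y).PosSemidef ∧ x = f Y X (diagBlock W)} =
      sInf {x : EReal | ∃ (Y : Matrix ι ι ℝ) (X : Matrix ι κ ℝ) (S : ι → Matrix κ κ ℝ),
        Y.PosSemidef ∧ (1 - Y).PosSemidef ∧
        (∀ i, (S i).PosSemidef) ∧ (∀ i, (S i - vecMulVec (X i) (X i)).PosSemidef) ∧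
        (fromBlocks (∑ i, S i) Xᵀ X Y).PosSemidef ∧ x = f Y X S} := by
  congr 1
  ext x
  constructor
  · rintro ⟨Y, X, W, hY, hY_le, -, hW, hblocks, hx⟩
    have hS := posSemidef_diagBlock_sub_vecMulVec hW
    exact ⟨Y, X, diagBlock W, hY, hY_le, fun i => posSemidef_of_posSemidef_sub_vecMulVec (hS i),
      hS, hblocks, hx⟩
  · rintro ⟨Y, X, S, hY, hY_le, -, hS, hblocks, hx⟩
    obtain ⟨W, rfl, hW⟩ := exists_diagBlock_eq_and_posSemidef_sub_vecMulVec hS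
    exact ⟨Y, X, W, hY, hY_le, posSemidef_of_posSemidef_sub_vecMulVec hW, hW, hblocks, hx⟩

/-- Proposition 4.1, low-rank matrix completion:
the Shor relaxation (4.2) and its reduced form (4.3) have equal values. -/
theorem stmt16 {n m : ℕ} (hn : 1 ≤ n) (hm : 1 ≤ m)
    (Obs : Set (Fin n × Fin m)) [DecidablePred (· ∈ Obs)]
    (A : Matrix (Fin n) (Fin m) ℝ) (lam : ℝ) (hlam : 0 ≤ lam) :
    sInf {x : EReal | ∃ (Y : Matrix (Fin n) (Fin n) ℝ)
        (X : Matrix (Fin n) (Fin m) ℝ)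
        (W : Matrix (Fin n × Fin m) (Fin n × Fin m) ℝ),
        Y.PosSemidef ∧ ((1 : Matrix (Fin n) (Fin n) ℝ) - Y).PosSemidef ∧
        W.PosSemidef ∧
        (W - Matrix.vecMulVec (fun p : Fin n × Fin m => X p.1 p.2)
              (fun p : Fin n × Fin m => X p.1 p.2)).PosSemidef ∧
        (Matrix.fromBlocks
            (Matrix.of fun j l : Fin m => ∑ i : Fin n, W (i, j) (i, l))
            Xᵀ X Y).PosSemidef ∧
        x = (((∑ i : Fin n, frob (Matrix.of fun j l : Fin m => W (i, j) (i, l))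
                  (Hdiag Obs i))
              - 2 * frob (maskP Obs X) (maskP Obs A)
              + frob (maskP Obs A) (maskP Obs A) + lam * Y.trace : ℝ) : EReal)} =
      sInf {x : EReal | ∃ (Y : Matrix (Fin n) (Fin n) ℝ)
        (X : Matrix (Fin n) (Fin m) ℝ)
        (S : Fin n → Matrix (Fin m) (Fin m) ℝ),
        Y.PosSemidef ∧ ((1 : Matrix (Fin n) (Fin n) ℝ) - Y).PosSemidef ∧
        (∀ i, (S i).PosSemidef) ∧
        (∀ i, (S i - Matrix.vecMulVec (fun j => X i j)
              (fun j => X i j)).PosSemidef) ∧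
        (Matrix.fromBlocks (∑ i, S i) Xᵀ X Y).PosSemidef ∧
        x = (((∑ i : Fin n, frob (S i) (Hdiag Obs i))
              - 2 * frob (maskP Obs X) (maskP Obs A)
              + frob (maskP Obs A) (maskP Obs A) + lam * Y.trace : ℝ) : EReal)} := by
  simpa only [sum_diagBlock] using! stmt16_general fun Y X S =>
    (((∑ i, frob (S i) (Hdiag Obs i)) - 2 * frob (maskP Obs X) (maskP Obs A)
      + frob (maskP Obs A) (maskP Obs A) + lam * Y.trace : ℝ) : EReal)
end

section
/- Let n, m, p ≥ 1, B ∈ ℝ^{n×m}, A ∈ ℝ^{n×p}, and μ ≥ 0. Define v₁ as the infimum of ⟨A^⊤A, Σ_{i∈[m]} W^{(i,i)}⟩ + ⟨B, B⟩ − 2⟨AX, B⟩ + μ·tr(Y) over tuples (Y, X, W) with Y ∈ S^m, 0 ⪯ Y ⪯ I_m; X ∈ ℝ^{p×m}; W ∈ S^{pm}_+ (with vec(X) ∈ ℝ^{pm} partitioned into m blocks of length p—the columns of X—and W accordingly an m×m array of p×p blocks W^{(i,j)}) satisfying W ⪰ vec(X)vec(X)^⊤; and [[Σ_{i∈[m]}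 W^{(i,i)}, X],[X^⊤, Y]] ⪰ 0. Define v₂ as the infimum of ⟨A^⊤A, θ⟩ + ⟨B, B⟩ − 2⟨AX, B⟩ + μ·tr(Y) over tuples (Y, X, θ) with Y ∈ S^m, 0 ⪯ Y ⪯ I_m; X ∈ ℝ^{p×m}; θ ∈ S^p_+; and [[θ, X],[X^⊤, Y]] ⪰ 0. Then v₁ = v₂. -/
open Matrix

/-!
`W` enters the block constraint and the objective only through `θ = ∑ i, W^(i,i)`, so it suffices to
show that every feasible `θ` comes from some `W ⪰ vec(X) vec(X)ᴴ`. Writing `M` for the block matrix,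
the identity `θ - X Xᴴ = [I, -X] M [I, -X]ᴴ + X (I - Y) Xᴴ` shows `θ ⪰ X Xᴴ`. The diagonal blocks of
`vec(X) vec(X)ᴴ` sum to `X Xᴴ`, so adding the slack `θ - X Xᴴ` to one of them gives such a `W`.
-/

section BlockTrace

variable {m p R : Type*} [Fintype m]

/-- The sum `∑ i, W^(i,i)` of the diagonal blocks of an `m × m` array `W` of `p × p` blocks, that
is, the partial trace over the first tensor factor. The index `(i, ρ)` is entry `ρ` of block `i`,
as in `Matrix.vec`. -/
def blockTrace [AddCommMonoid R] (W : Matrix (m × p) (m × p) R) : Matrix p p R :=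
  of fun ρ σ => ∑ i, W (i, ρ) (i, σ)

theorem blockTrace_add [AddCommMonoid R] (V W : Matrix (m × p) (m × p) R) :
    blockTrace (V + W) = blockTrace V + blockTrace W := by
  ext ρ σ
  exact Finset.sum_add_distrib

theorem blockTrace_vecMulVec_vec_star [NonUnitalNonAssocSemiring R] [Star R] (X : Matrix p m R) :
    blockTrace (vecMulVec (vec X) (star (vec X))) = X * Xᴴ :=
  rfl

end BlockTrace

section BlockInclusion

variable {m : Type*} (p R : Type*) [DecidableEq m] [DecidableEq p]

/-- The matrix of the inclusion of `R^p` as the `i`-th block of `R^(m × p)`. Conjugating a `p × p`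
matrix by it places that matrix in the `(i, i)` block. -/
def blockInclusion [Zero R] [One R] (i : m) : Matrix (m × p) p R :=
  (1 : Matrix (m × p) (m × p) R).submatrix id (Prod.mk i)

variable {p R}

theorem blockTrace_blockInclusion_conj [Fintype m] [Fintype p] [Semiring R] [StarRing R]
    (i : m) (D : Matrix p p R) :
    blockTrace (blockInclusion p R i * D * (blockInclusion p R i)ᴴ) = D := by
  ext ρ σ
  simp [blockTrace, blockInclusion, mul_apply, one_apply, ite_and]

end BlockInclusion

section Domination

variable {m p R : Type*} [Fintype m] [Finite p]
  [Ring R] [PartialOrder R] [StarRing R]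

theorem posSemidef_sub_mul_conjTranspose_of_fromBlocks [DecidableEq m] [AddLeftMono R]
    {θ : Matrix p p R} {X : Matrix p m R} {Y : Matrix m m R}
    (hblock : (fromBlocks θ X Xᴴ Y).PosSemidef) (hY_le : (1 - Y).PosSemidef) :
    (θ - X * Xᴴ).PosSemidef := by
  classical
  cases nonempty_fintype p
  let C : Matrix p (p ⊕ m) R := fromCols 1 (-X)
  have hdecomp : θ - X * Xᴴ = C * fromBlocks θ X Xᴴ Y * Cᴴ + X * (1 - Y) * Xᴴ := by
    simp only [C, fromCols_mul_fromBlocks, conjTranspose_fromCols_eq_fromRows_conjTranspose,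
      fromCols_mul_fromRows, conjTranspose_one, conjTranspose_neg, Matrix.one_mul, Matrix.mul_one,
      Matrix.neg_mul, Matrix.mul_neg, Matrix.add_mul, Matrix.mul_sub, Matrix.sub_mul]
    abel
  rw [hdecomp]
  exact (hblock.mul_mul_conjTranspose_same C).add (hY_le.mul_mul_conjTranspose_same X)

theorem exists_posSemidef_sub_vecMulVec_vec_and_blockTrace_eq [Nonempty m]
    {θ : Matrix p p R} {X : Matrix p m R} (hslack : (θ - X * Xᴴ).PosSemidef) :
    ∃ W : Matrix (m × p) (m × p) R,
      (W - vecMulVec (vec X) (star (vec X))).PosSemidef ∧ blockTrace W = θ := by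
  classical
  cases nonempty_fintype p
  obtain ⟨i⟩ := ‹Nonempty m›
  let C := blockInclusion p R i
  refine ⟨C * (θ - X * Xᴴ) * Cᴴ + vecMulVec (vec X) (star (vec X)), ?_, ?_⟩
  · rw [add_sub_cancel_right]
    exact hslack.mul_mul_conjTranspose_same C
  · rw [blockTrace_add, blockTrace_blockInclusion_conj, blockTrace_vecMulVec_vec_star,
      sub_add_cancel]

theorem stmt17_general [DecidableEq m] [Nonempty m] [StarOrderedRing R] {α : Type*}
    (objective : Matrix p p R → Matrix p m R → Matrix m m R → α) :
    {x | ∃ (Y : Matrix m m R) (X : Matrix p m R) (W : Matrix (m × p) (m × p) R),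
        Y.PosSemidef ∧ (1 - Y).PosSemidef ∧ W.PosSemidef ∧
        (W - vecMulVec (vec X) (star (vec X))).PosSemidef ∧
        (fromBlocks (blockTrace W) X Xᴴ Y).PosSemidef ∧ x = objective (blockTrace W) X Y} =
      {x | ∃ (Y : Matrix m m R) (X : Matrix p m R) (θ : Matrix p p R),
        Y.PosSemidef ∧ (1 - Y).PosSemidef ∧ θ.PosSemidef ∧
        (fromBlocks θ X Xᴴ Y).PosSemidef ∧ x = objective θ X Y} := by
  ext x
  constructor
  · rintro ⟨Y, X, W, hY, hY_le, -, -, hblock, rfl⟩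
    exact ⟨Y, X, blockTrace W, hY, hY_le, hblock.submatrix Sum.inl, hblock, rfl⟩
  · rintro ⟨Y, X, θ, hY, hY_le, -, hblock, rfl⟩
    obtain ⟨W, hWX, rfl⟩ := exists_posSemidef_sub_vecMulVec_vec_and_blockTrace_eq
      (posSemidef_sub_mul_conjTranspose_of_fromBlocks hblock hY_le)
    have hW : W.PosSemidef := by
      cases nonempty_fintype p
      simpa only [sub_add_cancel] using hWX.add (posSemidef_vecMulVec_self_star (vec X))
    exact ⟨Y, X, W, hY, hY_le, hW, hWX, hblock, rfl⟩

end Domination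

/-- Proposition 4.2, reduced rank regression:
the Shor relaxation (4.5) and the matrix perspective relaxation (4.6)
have equal values. -/
theorem stmt17 {n m p : ℕ} (hn : 1 ≤ n) (hm : 1 ≤ m) (hp : 1 ≤ p)
    (B : Matrix (Fin n) (Fin m) ℝ) (A : Matrix (Fin n) (Fin p) ℝ)
    (μ : ℝ) (hμ : 0 ≤ μ) :
    sInf {x : EReal | ∃ (Y : Matrix (Fin m) (Fin m) ℝ)
        (X : Matrix (Fin p) (Fin m) ℝ)
        (W : Matrix (Fin m × Fin p) (Fin m × Fin p) ℝ),
        Y.PosSemidef ∧ ((1 : Matrix (Fin m) (Fin m) ℝ) - Y).PosSemidef ∧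
        W.PosSemidef ∧
        (W - Matrix.vecMulVec (fun q : Fin m × Fin p => X q.2 q.1)
              (fun q : Fin m × Fin p => X q.2 q.1)).PosSemidef ∧
        (Matrix.fromBlocks
            (Matrix.of fun ρ σ : Fin p => ∑ i : Fin m, W (i, ρ) (i, σ))
            X Xᵀ Y).PosSemidef ∧
        x = ((frob (Aᵀ * A)
                (Matrix.of fun ρ σ : Fin p => ∑ i : Fin m, W (i, ρ) (i, σ))
              + frob B B - 2 * frob (A * X) B + μ * Y.trace : ℝ) : EReal)} =
      sInf {x : EReal | ∃ (Y : Matrix (Fin m) (Fin m) ℝ)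
        (X : Matrix (Fin p) (Fin m) ℝ)
        (θ : Matrix (Fin p) (Fin p) ℝ),
        Y.PosSemidef ∧ ((1 : Matrix (Fin m) (Fin m) ℝ) - Y).PosSemidef ∧
        θ.PosSemidef ∧
        (Matrix.fromBlocks θ X Xᵀ Y).PosSemidef ∧
        x = ((frob (Aᵀ * A) θ + frob B B - 2 * frob (A * X) B
              + μ * Y.trace : ℝ) : EReal)} := by
  have : Nonempty (Fin m) := ⟨⟨0, hm⟩⟩
  exact congrArg sInf (stmt17_general fun θ X Y =>
    ((frob (Aᵀ * A) θ + frob B B - 2 * frob (A * X) B + μ * Y.trace : ℝ) : EReal))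
end
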